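/- For all n ≥ 0, A_{2n+2}(p,−1) = ((p+1)/2) · ((p−1)/2)^n · E_{2n+3}, where A_m(p,q) is the refined Eulerian polynomial and E_m is the Euler number. -/

import Mathlib

open Finset

/-- The set of (0-based) descent indices of a permutation of `Fin n`:
`i` is a descent index if `π i > π (i+1)` (so the 1-based descent position is `i+1`). -/
def descentSet {n : ℕ} (π : Equiv.Perm (Fin n)) : Finset ℕ :=
  (Finset.range n).filter
    (fun i => ∃ h : i + 1 < n, π ⟨i + 1, h⟩ < π ⟨i, Nat.lt_of_succ_lt h⟩)

/-- The number of descents of `π`. -/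
def des {n : ℕ} (π : Equiv.Perm (Fin n)) : ℕ := (descentSet π).card

/-- The number of descents of `π` at odd (1-based) positions, i.e. even 0-based indices. -/
def odes {n : ℕ} (π : Equiv.Perm (Fin n)) : ℕ :=
  ((descentSet π).filter (fun i => Even i)).card

/-- The number of descents of `π` at even (1-based) positions, i.e. odd 0-based indices. -/
def edes {n : ℕ} (π : Equiv.Perm (Fin n)) : ℕ :=
  ((descentSet π).filter (fun i => Odd i)).card

/-- The refined Eulerian polynomial `A_n(p,q) = Σ_π p^{odes π} q^{edes π}`. -/
def refinedEulerian (n : ℕ) (p q : ℝ) : ℝ :=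
  ∑ π : Equiv.Perm (Fin n), p ^ odes π * q ^ edes π

/-- The Eulerian polynomial `A_n(q) = Σ_π q^{des π}` as a function. -/
def eulerianEval (n : ℕ) (q : ℝ) : ℝ :=
  ∑ π : Equiv.Perm (Fin n), q ^ des π

/-- The Eulerian polynomial `A_n(q)` as a polynomial. -/
noncomputable def eulerianPolynomial (n : ℕ) : Polynomial ℝ :=
  ∑ π : Equiv.Perm (Fin n), Polynomial.X ^ des π

/-- The Eulerian number `A_{n,k}`: the number of permutations of `[n]` with `k` descents. -/
def eulerianNumber (n k : ℕ) : ℕ :=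
  (Finset.univ.filter (fun π : Equiv.Perm (Fin n) => des π = k)).card

/-- A permutation `a_1 a_2 … a_n` is alternating if `a_1 > a_2 < a_3 > ⋯`. -/
def IsAlternating {n : ℕ} (π : Equiv.Perm (Fin n)) : Prop :=
  ∀ i : ℕ, ∀ h : i + 1 < n,
    (π ⟨i + 1, h⟩ < π ⟨i, Nat.lt_of_succ_lt h⟩ ↔ Even i)

open scoped Classical in
/-- The Euler number `E_n`: the number of alternating permutations of `[n]`. -/
noncomputable def eulerNumber (n : ℕ) : ℕ :=
  (Finset.univ.filter (fun π : Equiv.Perm (Fin n) => IsAlternating π)).card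

/-- `a_{n,k}`: the number of permutations of `[n]` with `k` even descents and no odd descents. -/
def aNum (n k : ℕ) : ℕ :=
  (Finset.univ.filter (fun π : Equiv.Perm (Fin n) => edes π = k ∧ odes π = 0)).card

/-- The permutation of `Fin (n + 1)` obtained by appending the value `k` at the end of `π`, after
shifting up the values of `π` that are at least `k`. -/
def appendValue {n : ℕ} (k : Fin (n + 1)) (π : Equiv.Perm (Fin n)) : Equiv.Perm (Fin (n + 1)) :=
  ((finSuccEquiv' (Fin.last n)).trans (Equiv.optionCongr π)).trans (finSuccEquiv' k).symm

@[simp]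
theorem appendValue_last {n : ℕ} (k : Fin (n + 1)) (π : Equiv.Perm (Fin n)) :
    appendValue k π (Fin.last n) = k := by
  simp [appendValue]

@[simp]
theorem appendValue_castSucc {n : ℕ} (k : Fin (n + 1)) (π : Equiv.Perm (Fin n)) (i : Fin n) :
    appendValue k π i.castSucc = k.succAbove (π i) := by
  simp [appendValue, finSuccEquiv'_last_apply_castSucc]

theorem appendValue_bijective (n : ℕ) :
    Function.Bijective
      (fun x : Fin (n + 1) × Equiv.Perm (Fin n) => appendValue x.1 x.2) := by
  rw [Fintype.bijective_iff_injective_and_card]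
  constructor
  · rintro ⟨k, π⟩ ⟨l, τ⟩ h
    have hk : k = l := by simpa using DFunLike.congr_fun h (Fin.last n)
    subst hk
    have hπ : π = τ := by
      refine Equiv.ext fun i => ?_
      simpa using DFunLike.congr_fun h i.castSucc
    rw [hπ]
  · simp [Fintype.card_perm, Nat.factorial_succ]

theorem mem_descentSet {n : ℕ} {π : Equiv.Perm (Fin n)} {i : ℕ} :
    i ∈ descentSet π ↔ ∃ h : i + 1 < n, π ⟨i + 1, h⟩ < π ⟨i, Nat.lt_of_succ_lt h⟩ := by
  simp only [descentSet, mem_filter, mem_range, and_iff_right_iff_imp]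
  rintro ⟨h, -⟩
  omega

theorem mem_descentSet_appendValue {n : ℕ} (k : Fin (n + 1)) (π : Equiv.Perm (Fin n)) {i : ℕ}
    (hi : i + 1 < n) : i ∈ descentSet (appendValue k π) ↔ i ∈ descentSet π := by
  have h₁ := appendValue_castSucc k π ⟨i, by omega⟩
  have h₂ := appendValue_castSucc k π ⟨i + 1, hi⟩
  simp only [Fin.castSucc_mk] at h₁ h₂
  simp [mem_descentSet, h₁, h₂, hi, hi.trans (Nat.lt_succ_self n)]

theorem last_mem_descentSet_appendValue {n : ℕ} (k : Fin (n + 2)) (π : Equiv.Perm (Fin (n + 1))) :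
    n ∈ descentSet (appendValue k π) ↔ (k : ℕ) ≤ π (Fin.last n) := by
  have h₁ := appendValue_castSucc k π (Fin.last n)
  have h₂ := appendValue_last k π
  simp only [Fin.last, Fin.castSucc_mk] at h₁ h₂
  simp [mem_descentSet, h₁, h₂, Fin.lt_succAbove_iff_le_castSucc, Fin.le_def, Fin.last]

section DescentWeight

variable {R : Type*} [CommRing R] (α β : ℕ → R)

/-- The product over the positions `1, …, n - 1` of `π` of `α i` if `i` is a descent position and
`β i` otherwise. -/
def descentWeight {n : ℕ} (π : Equiv.Perm (Fin n)) : R :=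
  ∏ i ∈ range (n - 1), if i ∈ descentSet π then α (i + 1) else β (i + 1)

/-- The sum of `descentWeight` over all permutations of `Fin n`. -/
def weightSum (n : ℕ) : R :=
  ∑ π : Equiv.Perm (Fin n), descentWeight α β π

/-- The sum of `descentWeight` over the permutations of `Fin (n + 1)` whose last value is `k`. -/
def lastWeightSum (n k : ℕ) : R :=
  ∑ π : Equiv.Perm (Fin (n + 1)), if (π (Fin.last n) : ℕ) = k then descentWeight α β π else 0

theorem descentWeight_appendValue {n : ℕ} (k : Fin (n + 2)) (π : Equiv.Perm (Fin (n + 1))) :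
    descentWeight α β (appendValue k π) =
      descentWeight α β π * if (k : ℕ) ≤ π (Fin.last n) then α (n + 1) else β (n + 1) := by
  simp only [descentWeight, Nat.add_sub_cancel, show n + 1 + 1 - 1 = n + 1 from rfl,
    prod_range_succ, last_mem_descentSet_appendValue]
  congr 1
  refine prod_congr rfl fun i hi => ?_
  simp only [mem_descentSet_appendValue k π (Nat.succ_lt_succ (mem_range.1 hi))]

theorem lastWeightSum_succ {n k : ℕ} (hk : k < n + 2) :
    lastWeightSum α β (n + 1) k = ∑ π : Equiv.Perm (Fin (n + 1)),
      descentWeight α β π * if k ≤ π (Fin.last n) then α (n + 1) else β (n + 1) := by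
  rw [lastWeightSum, ← (appendValue_bijective (n + 1)).sum_comp, Fintype.sum_prod_type,
    Fintype.sum_eq_single (⟨k, hk⟩ : Fin (n + 2))]
  · simp [descentWeight_appendValue]
  · intro l hl
    have : (l : ℕ) ≠ k := fun h => hl (Fin.ext h)
    simp [this]

theorem lastWeightSum_zero_zero : lastWeightSum α β 0 0 = 1 := by
  simp [lastWeightSum, descentWeight]

theorem lastWeightSum_succ_succ {n k : ℕ} (hk : k ≤ n) :
    lastWeightSum α β (n + 1) (k + 1) = lastWeightSum α β (n + 1) k +
      (β (n + 1) - α (n + 1)) * lastWeightSum α β n k := by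
  rw [lastWeightSum_succ α β (by omega), lastWeightSum_succ α β (by omega), lastWeightSum, mul_sum,
    ← sum_add_distrib]
  refine sum_congr rfl fun π _ => ?_
  rcases lt_trichotomy (π (Fin.last n) : ℕ) k with h | h | h
  · simp [h.ne, h.not_ge, show ¬k + 1 ≤ (π (Fin.last n) : ℕ) by omega]
  · simp [h]
    ring
  · simp [h.ne', h.le, show k + 1 ≤ (π (Fin.last n) : ℕ) by omega]

theorem weightSum_zero : weightSum α β 0 = 1 := by
  simp [weightSum, descentWeight]

theorem lastWeightSum_zero (hα : α 0 = 1) (n : ℕ) :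
    lastWeightSum α β n 0 = α n * weightSum α β n := by
  cases n with
  | zero => rw [lastWeightSum_zero_zero, hα, weightSum_zero, one_mul]
  | succ n => simp [lastWeightSum_succ, weightSum, mul_sum, mul_comm]

theorem lastWeightSum_self (hβ : β 0 = 1) (n : ℕ) :
    lastWeightSum α β n n = β n * weightSum α β n := by
  cases n with
  | zero => rw [lastWeightSum_zero_zero, hβ, weightSum_zero, one_mul]
  | succ n =>
    have h (π : Equiv.Perm (Fin (n + 1))) : ¬n + 1 ≤ (π (Fin.last n) : ℕ) := by omega
    simp [lastWeightSum_succ, weightSum, mul_sum, mul_comm, h]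

/-- Newton's forward difference formula for `lastWeightSum`. -/
theorem lastWeightSum_eq_sum_choose {n k : ℕ} (hk : k ≤ n) :
    lastWeightSum α β n k = ∑ j ∈ range (k + 1),
      (k.choose j : R) * ((∏ i ∈ range j, (β (n - i) - α (n - i))) *
        lastWeightSum α β (n - j) 0) := by
  induction k generalizing n with
  | zero => simp
  | succ k ih =>
    obtain ⟨n, rfl⟩ : ∃ m, n = m + 1 := ⟨n - 1, by omega⟩
    rw [sum_choose_succ_mul (fun j _ => (∏ i ∈ range j, (β (n + 1 - i) - α (n + 1 - i))) *
        lastWeightSum α β (n + 1 - j) 0),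
      lastWeightSum_succ_succ α β (by omega), ih (n := n + 1) (by omega), ih (n := n) (by omega),
      mul_sum]
    congr 1
    refine sum_congr rfl fun j _ => ?_
    simp only [prod_range_succ', Nat.add_sub_add_right, Nat.sub_zero]
    ring

theorem mul_weightSum_eq_sum_choose (hα : α 0 = 1) (hβ : β 0 = 1) (n : ℕ) :
    β n * weightSum α β n = ∑ j ∈ range (n + 1),
      (n.choose j : R) * ((∏ i ∈ range j, (β (n - i) - α (n - i))) *
        (α (n - j) * weightSum α β (n - j))) := by
  simp only [← lastWeightSum_self α β hβ, ← lastWeightSum_zero α β hα]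
  exact lastWeightSum_eq_sum_choose α β le_rfl

end DescentWeight

theorem descentSet_subset_range {n : ℕ} (π : Equiv.Perm (Fin n)) :
    descentSet π ⊆ range (n - 1) := by
  intro i hi
  obtain ⟨h, -⟩ := mem_descentSet.1 hi
  simp only [mem_range]
  omega

/-- Weights of descents that record `p` at odd and `q` at even positions. -/
def parityWeight (p q : ℝ) (n : ℕ) : ℝ :=
  if n = 0 then 1 else if Odd n then p else q

theorem parityWeight_zero (p q : ℝ) : parityWeight p q 0 = 1 := by
  simp [parityWeight]

theorem parityWeight_odd (p q : ℝ) (n : ℕ) : parityWeight p q (2 * n + 1) = p := by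
  simp [parityWeight]

theorem parityWeight_even (p q : ℝ) (n : ℕ) : parityWeight p q (2 * n + 2) = q := by
  simp [parityWeight, Nat.odd_add_one]

theorem refinedEulerian_eq_weightSum (n : ℕ) (p q : ℝ) :
    refinedEulerian n p q = weightSum (parityWeight p q) 1 n := by
  refine sum_congr rfl fun π _ => ?_
  rw [descentWeight, ← prod_filter_mul_prod_filter_not _ (· ∈ descentSet π),
    prod_congr rfl (fun i hi => if_pos (mem_filter.1 hi).2),
    prod_eq_one (s := filter (· ∉ descentSet π) _) (fun i hi => by simp [(mem_filter.1 hi).2]),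
    mul_one, filter_mem_eq_inter, inter_eq_right.2 (descentSet_subset_range π),
    ← prod_filter_mul_prod_filter_not _ (fun i => Even i), odes, edes]
  congr 1
  · rw [prod_congr rfl (g := fun _ => p), prod_const]
    intro i hi
    simp [parityWeight, (mem_filter.1 hi).2]
  · rw [prod_congr rfl (g := fun _ => q), prod_const]
    · simp
    · intro i hi
      have := (mem_filter.1 hi).2
      simp_all [parityWeight, Nat.odd_add_one]

/-- The Euler number as a weight sum whose weights force descents at odd positions and ascents at
even ones. -/
theorem eulerNumber_eq_weightSum (n : ℕ) :
    (eulerNumber n : ℝ) = weightSum (parityWeight 1 0) (fun n => if Odd n then 0 else 1) n := by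
  classical
  rw [eulerNumber, card_filter, Nat.cast_sum, weightSum]
  refine sum_congr rfl fun π _ => ?_
  have h : IsAlternating π ↔ ∀ i ∈ range (n - 1), (i ∈ descentSet π ↔ Even i) := by
    simp only [IsAlternating, mem_descentSet, mem_range]
    refine forall_congr' fun i => ⟨fun h hi => ?_, fun h hi => ?_⟩
    · have hi : i + 1 < n := by omega
      simpa [hi] using h hi
    · simpa [hi] using h (by omega)
  have h' (i : ℕ) : (if i ∈ descentSet π then parityWeight 1 0 (i + 1)
      else if Odd (i + 1) then 0 else 1) =
        if (i ∈ descentSet π ↔ Even i) then (1 : ℝ) else 0 := by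
    by_cases hi : i ∈ descentSet π <;> by_cases he : Even i <;>
      simp [hi, he, parityWeight, Nat.odd_add_one]
  simp only [descentWeight, h', prod_ite_zero, h, prod_const_one]
  split_ifs <;> simp

section PowerSeries

open PowerSeries

/-- The power series `∑ uⁱ Xⁱ / (2i)!`, that is, `cosh √(uX)`. -/
noncomputable def coshSqrt (u : ℝ) : ℝ⟦X⟧ :=
  PowerSeries.mk fun i => u ^ i / (2 * i).factorial

/-- The power series `∑ uⁱ Xⁱ / (2i + 1)!`, that is, `sinh √(uX) / √(uX)`. -/
noncomputable def sinhcSqrt (u : ℝ) : ℝ⟦X⟧ :=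
  PowerSeries.mk fun i => u ^ i / (2 * i + 1).factorial

/-- The derivation `2X · d/dX`, which is `t · d/dt` under the substitution `X = t²`. -/
noncomputable def eulerDerivation : Derivation ℝ ℝ⟦X⟧ ℝ⟦X⟧ :=
  (2 * X : ℝ⟦X⟧) • PowerSeries.derivative ℝ

theorem coeff_eulerDerivation (f : ℝ⟦X⟧) (n : ℕ) :
    coeff n (eulerDerivation f) = 2 * n * coeff n f := by
  have h : eulerDerivation f = C 2 * (X * PowerSeries.derivative ℝ f) := by
    rw [eulerDerivation, Derivation.smul_apply, smul_eq_mul, mul_assoc, map_ofNat]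
  rw [h, coeff_C_mul]
  cases n with
  | zero => simp
  | succ n =>
    rw [coeff_succ_X_mul, coeff_derivative]
    push_cast
    ring

theorem eulerDerivation_X : eulerDerivation X = 2 * X := by
  simp [eulerDerivation]

theorem eulerDerivation_C (r : ℝ) : eulerDerivation (C r) = 0 := by
  simp [eulerDerivation]

theorem eulerDerivation_mul (f g : ℝ⟦X⟧) :
    eulerDerivation (f * g) = f * eulerDerivation g + g * eulerDerivation f := by
  simp [Derivation.leibniz]

theorem eulerDerivation_coshSqrt (u : ℝ) :
    eulerDerivation (coshSqrt u) = C u * (X * sinhcSqrt u) := by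
  ext n
  rw [coeff_eulerDerivation, coeff_C_mul]
  cases n with
  | zero => simp
  | succ n =>
    rw [coeff_succ_X_mul, coshSqrt, sinhcSqrt, coeff_mk, coeff_mk,
      show 2 * (n + 1) = 2 * n + 1 + 1 by ring, Nat.factorial_succ]
    have := (2 * n + 1).factorial_ne_zero
    push_cast
    field_simp
    ring

theorem eulerDerivation_sinhcSqrt (u : ℝ) :
    eulerDerivation (sinhcSqrt u) = coshSqrt u - sinhcSqrt u := by
  ext n
  rw [coeff_eulerDerivation, map_sub, coshSqrt, sinhcSqrt, coeff_mk, coeff_mk, Nat.factorial_succ]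
  have := (2 * n).factorial_ne_zero
  push_cast
  field_simp
  ring

theorem eq_coshSqrt_and_sinhcSqrt {u : ℝ} {c s : ℝ⟦X⟧} (h₀ : coeff 0 c = 1)
    (hc : eulerDerivation c = C u * (X * s)) (hs : eulerDerivation s = c - s) :
    c = coshSqrt u ∧ s = sinhcSqrt u := by
  have hs' (n : ℕ) : (2 * n + 1) * coeff n s = coeff n c := by
    have := congrArg (coeff n) hs
    rw [coeff_eulerDerivation, map_sub] at this
    linarith
  have hc' (n : ℕ) : 2 * ((n : ℝ) + 1) * coeff (n + 1) c = u * coeff n s := by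
    have := congrArg (coeff (n + 1)) hc
    rw [coeff_eulerDerivation, coeff_C_mul, coeff_succ_X_mul] at this
    exact_mod_cast this
  have hcs (n : ℕ) (h : coeff n c = u ^ n / (2 * n).factorial) :
      coeff n s = u ^ n / (2 * n + 1).factorial := by
    have h1 := hs' n
    rw [h] at h1
    rw [Nat.factorial_succ]
    have := (2 * n).factorial_ne_zero
    push_cast
    field_simp at h1 ⊢
    linarith
  have key (n : ℕ) : coeff n c = u ^ n / (2 * n).factorial := by
    induction n with
    | zero => simpa using h₀
    | succ n ih =>
      have h1 := hc' n
      rw [hcs n ih] at h1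
      rw [show 2 * (n + 1) = 2 * n + 1 + 1 by ring, Nat.factorial_succ (2 * n + 1)]
      have := (2 * n + 1).factorial_ne_zero
      push_cast
      field_simp at h1 ⊢
      linear_combination h1
  constructor <;> ext n
  · rw [key, coshSqrt, coeff_mk]
  · rw [hcs n (key n), sinhcSqrt, coeff_mk]

theorem coshSqrt_sq_sub (u : ℝ) :
    coshSqrt u ^ 2 - C u * (X * sinhcSqrt u ^ 2) = 1 := by
  have h : eulerDerivation (coshSqrt u ^ 2 - C u * (X * sinhcSqrt u ^ 2)) = 0 := by
    simp only [sq, map_sub, eulerDerivation_mul, eulerDerivation_C, eulerDerivation_X,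
      eulerDerivation_coshSqrt, eulerDerivation_sinhcSqrt]
    ring
  ext n
  cases n with
  | zero => simp [coshSqrt]
  | succ n =>
    have := congrArg (coeff (n + 1)) h
    rw [coeff_eulerDerivation, map_zero] at this
    have h0 : (2 * ((n + 1 : ℕ) : ℝ)) ≠ 0 := by positivity
    rw [(mul_eq_zero.1 this).resolve_left h0, coeff_one, if_neg n.succ_ne_zero]

/-- The double angle formulas for `cosh` and `sinh`. -/
theorem coshSqrt_and_sinhcSqrt_four_mul (u : ℝ) :
    coshSqrt u ^ 2 + C u * (X * sinhcSqrt u ^ 2) = coshSqrt (4 * u) ∧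
      coshSqrt u * sinhcSqrt u = sinhcSqrt (4 * u) := by
  apply eq_coshSqrt_and_sinhcSqrt
  · simp [coshSqrt]
  · simp only [sq, map_add, map_mul, map_ofNat, eulerDerivation_mul, eulerDerivation_C,
      eulerDerivation_X, eulerDerivation_coshSqrt, eulerDerivation_sinhcSqrt]
    ring
  · simp only [sq, eulerDerivation_mul, eulerDerivation_coshSqrt, eulerDerivation_sinhcSqrt]
    ring

theorem coshSqrt_ne_zero (u : ℝ) : coshSqrt u ≠ 0 := by
  intro h
  simpa [coshSqrt] using congrArg (coeff 0) h

/-- The Riccati equation satisfied by `tanh`. -/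
theorem eulerDerivation_add_self_of_coshSqrt_mul_eq {u : ℝ} {f : ℝ⟦X⟧}
    (h : coshSqrt u * f = sinhcSqrt u) :
    eulerDerivation f + f = 1 - C u * (X * f ^ 2) := by
  have hD := congrArg eulerDerivation h
  rw [eulerDerivation_mul, eulerDerivation_coshSqrt, eulerDerivation_sinhcSqrt] at hD
  apply mul_left_cancel₀ (coshSqrt_ne_zero u)
  linear_combination hD + (1 + C u * X * f) * h

theorem sum_range_two_mul {M : Type*} [AddCommMonoid M] (f : ℕ → M) (n : ℕ) :
    ∑ i ∈ range (2 * n), f i = ∑ i ∈ range n, f (2 * i) + ∑ i ∈ range n, f (2 * i + 1) := by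
  induction n with
  | zero => simp
  | succ n ih =>
    rw [Nat.mul_succ, sum_range_succ, sum_range_succ, ih, sum_range_succ, sum_range_succ]
    abel

section Parity

variable {c : ℕ → ℝ} {a b : ℝ}

theorem prod_range_two_mul_sub (hodd : ∀ n, c (2 * n + 1) = a) (heven : ∀ n, c (2 * n + 2) = b)
    {n k : ℕ} (hk : 2 * k ≤ n) : ∏ i ∈ range (2 * k), c (n - i) = (a * b) ^ k := by
  induction k with
  | zero => simp
  | succ k ih =>
    rw [Nat.mul_succ, prod_range_succ, prod_range_succ, ih (by omega), pow_succ, mul_assoc]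
    congr 1
    rcases Nat.even_or_odd' n with ⟨m, rfl | rfl⟩
    · rw [show 2 * m - 2 * k = 2 * (m - k - 1) + 2 by omega,
        show 2 * m - (2 * k + 1) = 2 * (m - k - 1) + 1 by omega, hodd, heven, mul_comm]
    · rw [show 2 * m + 1 - 2 * k = 2 * (m - k) + 1 by omega,
        show 2 * m + 1 - (2 * k + 1) = 2 * (m - k - 1) + 2 by omega, hodd, heven]

variable (α β : ℕ → ℝ)

theorem mul_weightSum_div_factorial (hα : α 0 = 1) (hβ : β 0 = 1) (n : ℕ) :
    β n * weightSum α β n / n.factorial = ∑ j ∈ range (n + 1),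
      (∏ i ∈ range j, (β (n - i) - α (n - i))) / j.factorial *
        (α (n - j) * weightSum α β (n - j) / (n - j).factorial) := by
  rw [mul_weightSum_eq_sum_choose α β hα hβ, sum_div]
  refine sum_congr rfl fun j hj => ?_
  have hj : j ≤ n := by simpa [Nat.lt_succ_iff] using hj
  rw [Nat.cast_choose ℝ hj]
  have := n.factorial_ne_zero
  have := j.factorial_ne_zero
  have := (n - j).factorial_ne_zero
  field_simp

theorem mk_even_mul_weightSum (hα : α 0 = 1) (hβ : β 0 = 1)
    (hodd : ∀ n, β (2 * n + 1) - α (2 * n + 1) = a)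
    (heven : ∀ n, β (2 * n + 2) - α (2 * n + 2) = b) :
    (PowerSeries.mk fun n => β (2 * n) * weightSum α β (2 * n) / (2 * n).factorial) =
      coshSqrt (a * b) *
        (PowerSeries.mk fun n => α (2 * n) * weightSum α β (2 * n) / (2 * n).factorial) +
      C b * (X * (sinhcSqrt (a * b) *
        PowerSeries.mk fun n =>
          α (2 * n + 1) * weightSum α β (2 * n + 1) / (2 * n + 1).factorial)) := by
  ext n
  rw [coeff_mk, mul_weightSum_div_factorial α β hα hβ, map_add, coeff_C_mul, coeff_mul,
    Nat.sum_antidiagonal_eq_sum_range_succ_mk]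
  cases n with
  | zero => simp [coshSqrt]
  | succ n =>
    rw [coeff_succ_X_mul, coeff_mul, Nat.sum_antidiagonal_eq_sum_range_succ_mk, sum_range_succ,
      sum_range_two_mul, sum_range_succ _ n.succ, mul_sum, add_right_comm]
    simp only [coshSqrt, sinhcSqrt, coeff_mk]
    congr 1
    · congr 1
      · refine sum_congr rfl fun i hi => ?_
        have hi := mem_range.1 hi
        rw [prod_range_two_mul_sub (c := fun n => β n - α n) hodd heven (by omega), Nat.mul_sub]
      · rw [prod_range_two_mul_sub (c := fun n => β n - α n) hodd heven (by omega), Nat.mul_sub]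
    · refine sum_congr rfl fun i hi => ?_
      have hi := mem_range.1 hi
      rw [prod_range_succ, prod_range_two_mul_sub (c := fun n => β n - α n) hodd heven (by omega),
        show 2 * (n + 1) - 2 * i = 2 * (n - i) + 2 by omega, heven,
        show 2 * (n + 1) - (2 * i + 1) = 2 * (n - i) + 1 by omega]
      ring

theorem mk_odd_mul_weightSum (hα : α 0 = 1) (hβ : β 0 = 1)
    (hodd : ∀ n, β (2 * n + 1) - α (2 * n + 1) = a)
    (heven : ∀ n, β (2 * n + 2) - α (2 * n + 2) = b) :
    (PowerSeries.mk fun n => β (2 * n + 1) * weightSum α β (2 * n + 1) / (2 * n + 1).factorial) =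
      coshSqrt (a * b) *
        (PowerSeries.mk fun n => α (2 * n + 1) * weightSum α β (2 * n + 1) / (2 * n + 1).factorial) +
      C a * (sinhcSqrt (a * b) *
        PowerSeries.mk fun n => α (2 * n) * weightSum α β (2 * n) / (2 * n).factorial) := by
  ext n
  rw [coeff_mk, mul_weightSum_div_factorial α β hα hβ, map_add, coeff_C_mul, coeff_mul, coeff_mul,
    Nat.sum_antidiagonal_eq_sum_range_succ_mk, Nat.sum_antidiagonal_eq_sum_range_succ_mk,
    show 2 * n + 1 + 1 = 2 * (n + 1) by ring, sum_range_two_mul, mul_sum]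
  simp only [coshSqrt, sinhcSqrt, coeff_mk]
  congr 1 <;> refine sum_congr rfl fun i hi => ?_ <;> have hi := mem_range.1 hi
  · rw [prod_range_two_mul_sub (c := fun n => β n - α n) hodd heven (by omega),
      show 2 * n + 1 - 2 * i = 2 * (n - i) + 1 by omega]
  · rw [prod_range_succ, prod_range_two_mul_sub (c := fun n => β n - α n) hodd heven (by omega),
      show 2 * n + 1 - 2 * i = 2 * (n - i) + 1 by omega, hodd,
      show 2 * n + 1 - (2 * i + 1) = 2 * (n - i) by omega]
    ring

end Parity

/-- The generating function of the tangent numbers: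
`cos t · ∑ E_{2n+1} t^{2n+1} / (2n+1)! = sin t`. -/
theorem coshSqrt_mul_mk_eulerNumber :
    coshSqrt (-1) * (PowerSeries.mk fun n =>
      (eulerNumber (2 * n + 1) : ℝ) / (2 * n + 1).factorial) = sinhcSqrt (-1) := by
  have h := mk_odd_mul_weightSum (a := -1) (b := 1) (parityWeight 1 0)
    (fun n => if Odd n then 0 else 1) (parityWeight_zero 1 0) (by simp)
    (fun n => by simp [parityWeight_odd]) (fun n => by simp [parityWeight_even, Nat.odd_add_one])
  have h1 : (PowerSeries.mk fun n => parityWeight 1 0 (2 * n) *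
      weightSum (parityWeight 1 0) (fun n => if Odd n then 0 else 1) (2 * n) /
        (2 * n).factorial) = 1 := by
    ext n
    cases n <;> simp [parityWeight, weightSum_zero, coeff_one]
  rw [h1] at h
  simp only [← eulerNumber_eq_weightSum] at h
  have h2 : (PowerSeries.mk fun n => (if Odd (2 * n + 1) then (0 : ℝ) else 1) *
      (eulerNumber (2 * n + 1) : ℝ) / (2 * n + 1).factorial) = 0 := by
    ext n
    simp
  rw [h2] at h
  simp only [parityWeight, Nat.succ_ne_zero, if_false, odd_two_mul_add_one, if_true, one_mul,
    mul_one, map_neg, map_one] at h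
  linear_combination -h

theorem rescale_coshSqrt (u v : ℝ) : rescale v (coshSqrt u) = coshSqrt (v * u) := by
  ext n
  simp [coshSqrt, coeff_rescale, mul_pow, mul_div_assoc]

theorem rescale_sinhcSqrt (u v : ℝ) : rescale v (sinhcSqrt u) = sinhcSqrt (v * u) := by
  ext n
  simp [sinhcSqrt, coeff_rescale, mul_pow, mul_div_assoc]

/-- The generating function of `A_{2n}(p, -1)`, in terms of that of the tangent numbers. -/
theorem mk_refinedEulerian_even {p : ℝ} (hp : p ≠ 1) {f : ℝ⟦X⟧}
    (hf : coshSqrt ((1 - p) / 2) * f = sinhcSqrt ((1 - p) / 2)) :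
    (PowerSeries.mk fun n => refinedEulerian (2 * n) p (-1) / (2 * n).factorial) =
      1 + C ((p + 1) / 2) * (X * f ^ 2) := by
  have h0 := parityWeight_zero p (-1)
  have hodd (n : ℕ) : 1 - parityWeight p (-1) (2 * n + 1) = 1 - p := by
    rw [parityWeight_odd]
  have heven (n : ℕ) : 1 - parityWeight p (-1) (2 * n + 2) = 2 := by
    rw [parityWeight_even]
    norm_num
  have he := mk_even_mul_weightSum (parityWeight p (-1)) 1 h0 rfl hodd heven
  have ho := mk_odd_mul_weightSum (parityWeight p (-1)) 1 h0 rfl hodd heven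
  simp only [← refinedEulerian_eq_weightSum, Pi.one_apply, one_mul] at he ho
  have hE : (PowerSeries.mk fun n => parityWeight p (-1) (2 * n) * refinedEulerian (2 * n) p (-1) /
      (2 * n).factorial) =
      2 - PowerSeries.mk fun n => refinedEulerian (2 * n) p (-1) / (2 * n).factorial := by
    ext n
    rw [← map_ofNat C 2, map_sub, coeff_mk, coeff_mk, coeff_C]
    cases n
    · simp [parityWeight, refinedEulerian_eq_weightSum, weightSum_zero]
      norm_num
    · simp [Nat.mul_succ, parityWeight_even, neg_div]
  have hO : (PowerSeries.mk fun n => parityWeight p (-1) (2 * n + 1) *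
      refinedEulerian (2 * n + 1) p (-1) / (2 * n + 1).factorial) =
      C p * PowerSeries.mk fun n =>
        refinedEulerian (2 * n + 1) p (-1) / (2 * n + 1).factorial := by
    ext n
    simp [parityWeight, mul_div_assoc]
  rw [hE, hO] at he ho
  set E := PowerSeries.mk fun n => refinedEulerian (2 * n) p (-1) / (2 * n).factorial
  set O := PowerSeries.mk fun n => refinedEulerian (2 * n + 1) p (-1) / (2 * n + 1).factorial
  obtain ⟨hc, hs⟩ := coshSqrt_and_sinhcSqrt_four_mul ((1 - p) / 2)
  have hcs := coshSqrt_sq_sub ((1 - p) / 2)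
  rw [show 4 * ((1 - p) / 2) = (1 - p) * 2 by ring] at hc hs
  rw [← hc, ← hs, ← hf] at he ho
  rw [← hf] at hcs
  have hne := coshSqrt_ne_zero ((1 - p) / 2)
  set c := coshSqrt ((1 - p) / 2)
  have hd : (C (1 - p) : ℝ⟦X⟧) ≠ 0 := by
    rw [Ne, map_eq_zero_iff C C_injective, sub_eq_zero]
    exact hp.symm
  have hC2 : (2 : ℝ⟦X⟧) = C 2 := (map_ofNat C 2).symm
  have h2 : (2 : ℝ⟦X⟧) ≠ 0 := by
    rw [hC2, Ne, map_eq_zero_iff C C_injective]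
    exact two_ne_zero
  have hdp : (C p : ℝ⟦X⟧) = 1 - 2 * C ((1 - p) / 2) := by
    rw [hC2, ← map_one C, ← map_mul, ← map_sub]
    congr 1
    ring
  have hd2 : (C (1 - p) : ℝ⟦X⟧) = 2 * C ((1 - p) / 2) := by
    rw [hC2, ← map_mul]
    congr 1
    ring
  have hp2 : (C ((p + 1) / 2) : ℝ⟦X⟧) = 1 - C ((1 - p) / 2) := by
    rw [← map_one C, ← map_sub]
    congr 1
    ring
  rw [hd2] at hd
  rw [map_ofNat, hdp] at he
  rw [hdp, hd2] at ho
  rw [hp2]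
  set w := (C ((1 - p) / 2) : ℝ⟦X⟧)
  refine mul_left_cancel₀ (mul_ne_zero (mul_ne_zero h2 hd) (pow_ne_zero 2 hne)) ?_
  linear_combination (1 - (1 - 2 * w) * (c ^ 2 + w * (X * (c * f) ^ 2))) * he +
    2 * (1 - 2 * w) * X * c ^ 2 * f * ho +
    ((1 - 2 * w) * (c ^ 2 - w * (X * (c * f) ^ 2) + 1) * (E - 2) + 2 * w * (E - 1) +
      2 - 2 * w) * hcs

end PowerSeries

/-- A_{2n+2}(p,−1) = ((p+1)/2)((p−1)/2)^n E_{2n+3}. -/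
theorem refinedEulerian_even_at_neg_one (n : ℕ) (p : ℝ) :
    refinedEulerian (2 * n + 2) p (-1) =
      ((p + 1) / 2) * ((p - 1) / 2) ^ n * (eulerNumber (2 * n + 3) : ℝ) := by
  revert p
  refine congrFun (Continuous.ext_on (dense_compl_singleton (1 : ℝ)) ?_ (by fun_prop) ?_)
  · unfold refinedEulerian
    fun_prop
  intro p hp
  have hp : p ≠ 1 := hp
  have hT := congrArg (PowerSeries.rescale ((p - 1) / 2)) coshSqrt_mul_mk_eulerNumber
  rw [map_mul, rescale_coshSqrt, rescale_sinhcSqrt,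
    show (p - 1) / 2 * -1 = (1 - p) / 2 by ring] at hT
  have h1 := congrArg (PowerSeries.coeff (n + 1)) (mk_refinedEulerian_even hp hT)
  have h2 := congrArg (PowerSeries.coeff (n + 1)) (eulerDerivation_add_self_of_coshSqrt_mul_eq hT)
  rw [map_add, PowerSeries.coeff_C_mul, PowerSeries.coeff_mk, PowerSeries.coeff_one,
    if_neg n.succ_ne_zero, zero_add] at h1
  rw [map_add, map_sub, coeff_eulerDerivation, PowerSeries.coeff_C_mul, PowerSeries.coeff_one,
    if_neg n.succ_ne_zero, PowerSeries.coeff_rescale, PowerSeries.coeff_mk] at h2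
  rw [show 2 * (n + 1) = 2 * n + 2 by ring] at h1 h2
  rw [show 2 * n + 2 + 1 = 2 * n + 3 by ring, Nat.factorial_succ (2 * n + 2)] at h2
  have hfac : ((2 * n + 2).factorial : ℝ) ≠ 0 := by positivity
  rw [div_eq_iff hfac] at h1
  push_cast at h2
  apply mul_left_cancel₀ (div_ne_zero (sub_ne_zero.2 hp) two_ne_zero : (p - 1) / 2 ≠ 0)
  beta_reduce
  rw [h1]
  generalize PowerSeries.coeff (n + 1) (_ : PowerSeries ℝ) = t at h2 ⊢
  have h3 : (p - 1) / 2 * t * (2 * n + 2).factorial =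
      ((p - 1) / 2) ^ (n + 1) * eulerNumber (2 * n + 3) := by
    rw [show (p - 1) / 2 * t = 0 - (1 - p) / 2 * t by ring, ← h2]
    field_simp
  linear_combination (p + 1) / 2 * h3
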